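/- Picone identity with base f_*: suppose s₀ > 0 satisfies the free boundary condition tanh(φ(s₀)) = B(s₀)·K/(a·sinh(2s₀)), and let r := arcosh(A(s₀)·cosh(φ(s₀))). Then for every integer k and every continuously differentiable h : [−s₀, s₀] → ℝ, setting u := f_*·h one has S_k(u) = (k² − 1)·∫_{−s₀}^{s₀} f_*(s)²·h(s)²/B(s) ds + ∫_{−s₀}^{s₀} B(s)·f_*(s)²·h'(s)² ds. -/

import Mathlib

/-!
The coordinate `F = A·cosh φ` of the minimal profile curve satisfies `(B·F')' = 2·B·F`.
Differentiating once more shows that `f_* = F'` is a Jacobi field of mode one,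
`(B·f_*')' = -B·W₁·f_*`. Picone's identity for `u = f_*·h` then leaves, besides the two integrals,
only the boundary flux of `B·f_*'·f_*·h²`. At a free boundary point `F = cosh r`, `f_* = sinh r` and
`f_*' = F`, so the Robin condition `f_*' = coth r·f_*` holds and the flux cancels the boundary term
of `S_k`.
-/

namespace MoriCatenoid

/-- Profile function `B(s) = √(a·cosh(2s) − 1/2)` of the Mori family. -/
noncomputable def B (a s : ℝ) : ℝ := Real.sqrt (a * Real.cosh (2 * s) - 1 / 2)

/-- Profile function `A(s) = √(a·cosh(2s) + 1/2)` of the Mori family. -/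
noncomputable def A (a s : ℝ) : ℝ := Real.sqrt (a * Real.cosh (2 * s) + 1 / 2)

/-- The constant `K = √(a² − 1/4)`. -/
noncomputable def K (a : ℝ) : ℝ := Real.sqrt (a ^ 2 - 1 / 4)

/-- The angle function `φ(s) = K·∫₀ˢ dt/(A(t)²·B(t))`. -/
noncomputable def φ (a s : ℝ) : ℝ := K a * ∫ t in (0:ℝ)..s, 1 / ((A a t) ^ 2 * B a t)

/-- The mode-one Jacobi field `f_*(s) = d/ds (A(s)·cosh(φ(s)))`. -/
noncomputable def fstar (a s : ℝ) : ℝ := deriv (fun t => A a t * Real.cosh (φ a t)) s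

/-- Squared norm of the second fundamental form, `|II|²(s) = 2·(B''(s)/B(s) − 1)`. -/
noncomputable def IIsq (a s : ℝ) : ℝ := 2 * (deriv (deriv (B a)) s / B a s - 1)

/-- The mode-`k` potential `W_k(s) = |II|²(s) − 2 − k²/B(s)²`. -/
noncomputable def W (a : ℝ) (k : ℤ) (s : ℝ) : ℝ := IIsq a s - 2 - (k : ℝ) ^ 2 / (B a s) ^ 2

/-- Inverse hyperbolic cosine: `arcosh x = log (x + √(x² − 1))`. -/
noncomputable def arcosh (x : ℝ) : ℝ := Real.log (x + Real.sqrt (x ^ 2 - 1))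

/-- The axial boost field `u_*(s) = −a·sinh(2s)/B(s)`. -/
noncomputable def ustar (a s : ℝ) : ℝ := -a * Real.sinh (2 * s) / B a s

/-- The radial quadratic form of mode `k`:
`S_k(u) = ∫_{−s₀}^{s₀} (B·u'² − B·W_k·u²) − coth(r)·B(s₀)·(u(s₀)² + u(−s₀)²)`,
where `u'` is the derivative of `u` within `[−s₀, s₀]`. -/
noncomputable def Sk (a s₀ r : ℝ) (k : ℤ) (u : ℝ → ℝ) : ℝ :=
  (∫ s in (-s₀)..s₀,
      (B a s * (derivWithin u (Set.Icc (-s₀) s₀) s) ^ 2 - B a s * W a k s * u s ^ 2))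
    - Real.cosh r / Real.sinh r * B a s₀ * (u s₀ ^ 2 + u (-s₀) ^ 2)

section Parity

open Function Set

variable {𝕜 E : Type*} [NontriviallyNormedField 𝕜] [NormedAddCommGroup E] [NormedSpace 𝕜 E]

lemma odd_deriv_of_even {f : 𝕜 → E} (hf : f.Even) : (deriv f).Odd := fun x => by
  rw [← neg_neg (deriv f (-x)), ← deriv_comp_neg, funext hf]

lemma even_deriv_of_odd {f : 𝕜 → E} (hf : f.Odd) : (deriv f).Even := fun x => by
  rw [← neg_neg (deriv f (-x)), ← deriv_comp_neg, funext hf, deriv.fun_neg, neg_neg]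

lemma odd_integral_of_even [NormedSpace ℝ E] {f : ℝ → E} (hf : f.Even) :
    (fun x => ∫ t in (0 : ℝ)..x, f t).Odd := fun x => by
  have := intervalIntegral.integral_comp_neg (a := 0) (b := x) f
  simp only [hf.eq, neg_zero] at this
  dsimp only
  rw [this, intervalIntegral.integral_symm]

end Parity

section Picone

open Set
open scoped Interval

theorem integral_picone {α β : ℝ} {p q q₀ f f' h h' : ℝ → ℝ}
    (hp : ContinuousOn p [[α, β]]) (hq : ContinuousOn q [[α, β]]) (hq₀ : ContinuousOn q₀ [[α, β]])
    (hf : ∀ x ∈ [[α, β]], HasDerivWithinAt f (f' x) [[α, β]] x)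
    (hf' : ContinuousOn f' [[α, β]])
    (hpf' : ∀ x ∈ [[α, β]],
      HasDerivWithinAt (fun y => p y * f' y) (-(q₀ x * f x)) [[α, β]] x)
    (hh : ∀ x ∈ [[α, β]], HasDerivWithinAt h (h' x) [[α, β]] x)
    (hh' : ContinuousOn h' [[α, β]]) :
    ∫ x in α..β, (p x * (f' x * h x + f x * h' x) ^ 2 - q x * (f x * h x) ^ 2)
      = (∫ x in α..β, (q₀ x - q x) * (f x * h x) ^ 2)
        + (∫ x in α..β, p x * f x ^ 2 * h' x ^ 2)
        + (p β * f' β * (f β * h β ^ 2) - p α * f' α * (f α * h α ^ 2)) := by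
  have hfc : ContinuousOn f [[α, β]] := fun x hx => (hf x hx).continuousWithinAt
  have hhc : ContinuousOn h [[α, β]] := fun x hx => (hh x hx).continuousWithinAt
  have hfh (x) (hx : x ∈ [[α, β]]) : HasDerivWithinAt (fun y => f y * h y ^ 2)
      (f' x * h x ^ 2 + f x * (2 * h x * h' x)) [[α, β]] x := by
    simpa using (hf x hx).fun_mul ((hh x hx).fun_pow 2)
  have flux := intervalIntegral.integral_deriv_mul_eq_sub_of_hasDerivWithinAt hpf' hfh
    (ContinuousOn.intervalIntegrable (by fun_prop))
    (ContinuousOn.intervalIntegrable (by fun_prop))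
  rw [← flux, ← intervalIntegral.integral_add, ← intervalIntegral.integral_add]
  · exact intervalIntegral.integral_congr fun x _ => by ring
  all_goals exact ContinuousOn.intervalIntegrable (by fun_prop)

theorem integral_picone_derivWithin {α β : ℝ} (hαβ : α ≠ β) {p q q₀ f f' h : ℝ → ℝ}
    (hp : ContinuousOn p [[α, β]]) (hq : ContinuousOn q [[α, β]]) (hq₀ : ContinuousOn q₀ [[α, β]])
    (hf : ∀ x ∈ [[α, β]], HasDerivWithinAt f (f' x) [[α, β]] x)
    (hf' : ContinuousOn f' [[α, β]])
    (hpf' : ∀ x ∈ [[α, β]],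
      HasDerivWithinAt (fun y => p y * f' y) (-(q₀ x * f x)) [[α, β]] x)
    (hh : ContDiffOn ℝ 1 h [[α, β]]) :
    ∫ x in α..β, (p x * derivWithin (fun y => f y * h y) [[α, β]] x ^ 2 - q x * (f x * h x) ^ 2)
      = (∫ x in α..β, (q₀ x - q x) * (f x * h x) ^ 2)
        + (∫ x in α..β, p x * f x ^ 2 * derivWithin h [[α, β]] x ^ 2)
        + (p β * f' β * (f β * h β ^ 2) - p α * f' α * (f α * h α ^ 2)) := by
  have hU : UniqueDiffOn ℝ [[α, β]] := uniqueDiffOn_uIcc hαβ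
  have hhd (x) (hx : x ∈ [[α, β]]) : HasDerivWithinAt h (derivWithin h [[α, β]] x) [[α, β]] x :=
    (hh.differentiableOn one_ne_zero x hx).hasDerivWithinAt
  rw [← integral_picone hp hq hq₀ hf hf' hpf' hhd (hh.continuousOn_derivWithin hU le_rfl)]
  refine intervalIntegral.integral_congr fun x hx => ?_
  rw [((hf x hx).fun_mul (hhd x hx)).derivWithin (hU x hx)]

end Picone

section Profile

open Real Function

variable {a : ℝ}

lemma half_lt_mul_cosh (ha : 1 / 2 < a) (t : ℝ) : 1 / 2 < a * cosh t := by
  nlinarith [one_le_cosh t]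

lemma A_sq (ha : 1 / 2 < a) (s : ℝ) : A a s ^ 2 = a * cosh (2 * s) + 1 / 2 :=
  sq_sqrt (by linarith [half_lt_mul_cosh ha (2 * s)])

lemma B_sq (ha : 1 / 2 < a) (s : ℝ) : B a s ^ 2 = a * cosh (2 * s) - 1 / 2 :=
  sq_sqrt (by linarith [half_lt_mul_cosh ha (2 * s)])

lemma A_sq_eq_B_sq_add_one (ha : 1 / 2 < a) (s : ℝ) : A a s ^ 2 = B a s ^ 2 + 1 := by
  rw [A_sq ha, B_sq ha]
  ring

lemma K_sq (ha : 1 / 2 < a) (s : ℝ) :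
    K a ^ 2 = A a s ^ 2 * B a s ^ 2 - (a * sinh (2 * s)) ^ 2 := by
  rw [K, sq_sqrt (by nlinarith), A_sq ha, B_sq ha]
  linear_combination (-a ^ 2) * cosh_sq (2 * s)

lemma one_le_A (ha : 1 / 2 < a) (s : ℝ) : 1 ≤ A a s :=
  one_le_sqrt.mpr (by linarith [half_lt_mul_cosh ha (2 * s)])

lemma A_pos (ha : 1 / 2 < a) (s : ℝ) : 0 < A a s :=
  zero_lt_one.trans_le (one_le_A ha s)

lemma B_pos (ha : 1 / 2 < a) (s : ℝ) : 0 < B a s :=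
  sqrt_pos.mpr (by linarith [half_lt_mul_cosh ha (2 * s)])

lemma even_A : (A a).Even := fun s => by simp [A]

lemma even_B : (B a).Even := fun s => by simp [B]

@[fun_prop]
lemma continuous_A : Continuous (A a) := by
  unfold A
  fun_prop

@[fun_prop]
lemma continuous_B : Continuous (B a) := by
  unfold B
  fun_prop

lemma hasDerivAt_mul_cosh_two_mul (a s : ℝ) :
    HasDerivAt (fun t => a * cosh (2 * t)) (2 * (a * sinh (2 * s))) s :=
  ((((hasDerivAt_id s).const_mul 2).cosh).const_mul a).congr_deriv (by simp; ring)

lemma hasDerivAt_mul_sinh_two_mul (ha : 1 / 2 < a) (s : ℝ) :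
    HasDerivAt (fun t => a * sinh (2 * t)) (2 * B a s ^ 2 + 1) s :=
  ((((hasDerivAt_id s).const_mul 2).sinh).const_mul a).congr_deriv (by simp [B_sq ha]; ring)

lemma hasDerivAt_A (ha : 1 / 2 < a) (s : ℝ) : HasDerivAt (A a) (a * sinh (2 * s) / A a s) s :=
  (((hasDerivAt_mul_cosh_two_mul a s).add_const (1 / 2)).sqrt
    (by linarith [half_lt_mul_cosh ha (2 * s)])).congr_deriv (mul_div_mul_left _ _ two_ne_zero)

lemma hasDerivAt_B (ha : 1 / 2 < a) (s : ℝ) : HasDerivAt (B a) (a * sinh (2 * s) / B a s) s :=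
  (((hasDerivAt_mul_cosh_two_mul a s).sub_const (1 / 2)).sqrt
    (by linarith [half_lt_mul_cosh ha (2 * s)])).congr_deriv (mul_div_mul_left _ _ two_ne_zero)

lemma IIsq_eq (ha : 1 / 2 < a) (s : ℝ) : IIsq a s = 2 * K a ^ 2 / B a s ^ 4 := by
  have hB := B_pos ha s
  have hB' : deriv (B a) = fun t => a * sinh (2 * t) / B a t :=
    funext fun t => (hasDerivAt_B ha t).deriv
  have hB'' := ((hasDerivAt_mul_sinh_two_mul ha s).fun_div (hasDerivAt_B ha s) hB.ne').deriv
  rw [IIsq, hB', hB'', K_sq ha s, A_sq_eq_B_sq_add_one ha]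
  field_simp
  ring

lemma W_eq (ha : 1 / 2 < a) (k : ℤ) (s : ℝ) :
    W a k s = 2 * K a ^ 2 / B a s ^ 4 - 2 - (k : ℝ) ^ 2 / B a s ^ 2 := by
  rw [W, IIsq_eq ha]

lemma B_mul_W_one_sub (ha : 1 / 2 < a) (k : ℤ) (s : ℝ) :
    B a s * W a 1 s - B a s * W a k s = ((k : ℝ) ^ 2 - 1) / B a s := by
  have hB := B_pos ha s
  rw [W, W]
  push_cast
  field_simp
  ring

lemma continuous_W (ha : 1 / 2 < a) (k : ℤ) : Continuous (W a k) := by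
  have hB (n : ℕ) (t : ℝ) : B a t ^ n ≠ 0 := (pow_pos (B_pos ha t) n).ne'
  rw [funext (W_eq ha k)]
  fun_prop (disch := exact hB _)

lemma odd_phi : (φ a).Odd := fun s => by
  have heven : (fun t => 1 / (A a t ^ 2 * B a t)).Even := fun t => by
    simp only [even_A.eq, even_B.eq]
  rw [φ, φ, ← mul_neg]
  exact congrArg (K a * ·) (odd_integral_of_even heven s)

lemma hasDerivAt_phi (ha : 1 / 2 < a) (s : ℝ) :
    HasDerivAt (φ a) (K a / (A a s ^ 2 * B a s)) s := by
  have hne (t : ℝ) : A a t ^ 2 * B a t ≠ 0 :=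
    (mul_pos (pow_pos (A_pos ha t) 2) (B_pos ha t)).ne'
  have hcont : Continuous fun t => 1 / (A a t ^ 2 * B a t) := by fun_prop (disch := exact hne)
  exact ((hcont.integral_hasStrictDerivAt 0 s).hasDerivAt.const_mul (K a)).congr_deriv
    (mul_one_div _ _)

end Profile

section JacobiField

open Real Function Set
open scoped Interval

variable {a : ℝ}

/-- The time coordinate `A·cosh φ` of the profile curve in the hyperboloid model of `ℍ³`, i.e. the
hyperbolic cosine of its distance to the origin. Its derivative is `f_*`. -/
noncomputable def timeCoord (a s : ℝ) : ℝ := A a s * cosh (φ a s)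

lemma one_le_timeCoord (ha : 1 / 2 < a) (s : ℝ) : 1 ≤ timeCoord a s :=
  one_le_mul_of_one_le_of_one_le (one_le_A ha s) (one_le_cosh _)

lemma even_timeCoord : (timeCoord a).Even := fun s => by
  rw [timeCoord, timeCoord, even_A.eq, odd_phi.eq, cosh_neg]

lemma odd_fstar : (fstar a).Odd := odd_deriv_of_even even_timeCoord

lemma even_deriv_fstar : (deriv (fstar a)).Even := even_deriv_of_odd odd_fstar

lemma hasDerivAt_timeCoord (ha : 1 / 2 < a) (s : ℝ) :
    HasDerivAt (timeCoord a) (fstar a s) s :=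
  ((hasDerivAt_A ha s).mul (hasDerivAt_phi ha s).cosh).differentiableAt.hasDerivAt

lemma B_mul_fstar (ha : 1 / 2 < a) (s : ℝ) : B a s * fstar a s =
    (a * sinh (2 * s) * B a s * cosh (φ a s) + K a * sinh (φ a s)) / A a s := by
  have hA := A_pos ha s
  have hB := B_pos ha s
  rw [(hasDerivAt_timeCoord ha s).unique ((hasDerivAt_A ha s).mul (hasDerivAt_phi ha s).cosh)]
  field_simp

lemma hasDerivAt_B_mul_fstar (ha : 1 / 2 < a) (s : ℝ) :
    HasDerivAt (fun t => B a t * fstar a t) (2 * B a s * timeCoord a s) s := by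
  have hA := A_pos ha s
  have hB := B_pos ha s
  have hφ := hasDerivAt_phi ha s
  rw [funext (B_mul_fstar ha)]
  refine (((((hasDerivAt_mul_sinh_two_mul ha s).fun_mul (hasDerivAt_B ha s)).fun_mul
    hφ.cosh).fun_add (hφ.sinh.const_mul (K a))).fun_div (hasDerivAt_A ha s) hA.ne').congr_deriv ?_
  have hK := K_sq ha s
  have hAB := A_sq_eq_B_sq_add_one ha s
  rw [timeCoord]
  field_simp
  linear_combination cosh (φ a s) * hK +
    cosh (φ a s) * ((a * sinh (2 * s)) ^ 2 - 2 * A a s ^ 2 * B a s ^ 2) * hAB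

lemma hasDerivAt_fstar (ha : 1 / 2 < a) (s : ℝ) : HasDerivAt (fstar a)
    (2 * timeCoord a s - a * sinh (2 * s) / B a s ^ 2 * fstar a s) s := by
  have hB (t : ℝ) : B a t ≠ 0 := (B_pos ha t).ne'
  have hquot : fstar a = fun t => B a t * fstar a t / B a t :=
    funext fun t => (mul_div_cancel_left₀ _ (hB t)).symm
  rw [hquot]
  refine ((hasDerivAt_B_mul_fstar ha s).fun_div (hasDerivAt_B ha s) (hB s)).congr_deriv ?_
  have := hB s
  field_simp

lemma deriv_fstar (ha : 1 / 2 < a) (s : ℝ) :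
    deriv (fstar a) s = 2 * timeCoord a s - a * sinh (2 * s) / B a s ^ 2 * fstar a s :=
  (hasDerivAt_fstar ha s).deriv

lemma continuous_fstar (ha : 1 / 2 < a) : Continuous (fstar a) :=
  continuous_iff_continuousAt.mpr fun s => (hasDerivAt_fstar ha s).continuousAt

lemma continuous_deriv_fstar (ha : 1 / 2 < a) : Continuous (deriv (fstar a)) := by
  have hB (t : ℝ) : B a t ^ 2 ≠ 0 := (pow_pos (B_pos ha t) 2).ne'
  have hF : Continuous (timeCoord a) :=
    continuous_iff_continuousAt.mpr fun s => (hasDerivAt_timeCoord ha s).continuousAt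
  have hf := continuous_fstar ha
  rw [funext (deriv_fstar ha)]
  fun_prop (disch := exact hB)

lemma hasDerivAt_B_mul_deriv_fstar (ha : 1 / 2 < a) (s : ℝ) :
    HasDerivAt (fun t => B a t * deriv (fstar a) t) (-(B a s * W a 1 s * fstar a s)) s := by
  have hB (t : ℝ) : B a t ≠ 0 := (B_pos ha t).ne'
  have hflux : (fun t => B a t * deriv (fstar a) t) = fun t =>
      2 * (B a t * timeCoord a t) - a * sinh (2 * t) * fstar a t / B a t := by
    ext t
    have := hB t
    rw [deriv_fstar ha]
    field_simp
  rw [hflux]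
  refine ((((hasDerivAt_B ha s).fun_mul (hasDerivAt_timeCoord ha s)).const_mul 2).fun_sub
    (((hasDerivAt_mul_sinh_two_mul ha s).fun_mul (hasDerivAt_fstar ha s)).fun_div
      (hasDerivAt_B ha s) (hB s))).congr_deriv ?_
  have := hB s
  rw [W_eq ha, K_sq ha s, A_sq_eq_B_sq_add_one ha]
  push_cast
  field_simp
  ring

theorem Sk_fstar_mul (ha : 1 / 2 < a) {s₀ : ℝ} (hs₀ : 0 < s₀) (r : ℝ) (k : ℤ) {h : ℝ → ℝ}
    (hh : ContDiffOn ℝ 1 h (Icc (-s₀) s₀)) :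
    Sk a s₀ r k (fun s => fstar a s * h s)
      = ((k : ℝ) ^ 2 - 1) * (∫ s in (-s₀)..s₀, fstar a s ^ 2 * h s ^ 2 / B a s)
        + (∫ s in (-s₀)..s₀,
            B a s * fstar a s ^ 2 * (derivWithin h (Icc (-s₀) s₀) s) ^ 2)
        + B a s₀ * fstar a s₀ * (deriv (fstar a) s₀ - cosh r / sinh r * fstar a s₀)
          * (h s₀ ^ 2 + h (-s₀) ^ 2) := by
  have hI : [[-s₀, s₀]] = Icc (-s₀) s₀ := uIcc_of_le (neg_le_self hs₀.le)
  have hf (s : ℝ) : HasDerivAt (fstar a) (deriv (fstar a) s) s :=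
    (hasDerivAt_fstar ha s).differentiableAt.hasDerivAt
  have hW (s : ℝ) : (B a s * W a 1 s - B a s * W a k s) * (fstar a s * h s) ^ 2
      = ((k : ℝ) ^ 2 - 1) * (fstar a s ^ 2 * h s ^ 2 / B a s) := by
    rw [B_mul_W_one_sub ha]
    ring
  have picone := integral_picone_derivWithin (neg_lt_self hs₀).ne
    (q := fun s => B a s * W a k s) (q₀ := fun s => B a s * W a 1 s)
    continuous_B.continuousOn (continuous_B.mul (continuous_W ha k)).continuousOn
    (continuous_B.mul (continuous_W ha 1)).continuousOn
    (fun s _ => (hf s).hasDerivWithinAt) (continuous_deriv_fstar ha).continuousOn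
    (fun s _ => (hasDerivAt_B_mul_deriv_fstar ha s).hasDerivWithinAt) (by rwa [hI])
  simp only [hI, hW, intervalIntegral.integral_const_mul, even_B.eq, odd_fstar.eq,
    even_deriv_fstar.eq] at picone
  rw [Sk, picone, odd_fstar.eq]
  ring

end JacobiField

section FreeBoundary

open Real

variable {a s : ℝ}

/-- The free boundary condition at the parameter `s`: there the Mori catenoid meets a geodesic
sphere centred at the origin orthogonally. At `s = 0` it holds by the convention `x / 0 = 0`. -/
def IsFreeBoundary (a s : ℝ) : Prop := tanh (φ a s) = B a s * K a / (a * sinh (2 * s))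

lemma mul_sinh_two_mul_ne_zero (ha : a ≠ 0) (hs : s ≠ 0) : a * sinh (2 * s) ≠ 0 :=
  mul_ne_zero ha (sinh_ne_zero.mpr (mul_ne_zero two_ne_zero hs))

namespace IsFreeBoundary

lemma mul_sinh_phi (hFBC : IsFreeBoundary a s) (ha : 1 / 2 < a) (hs : s ≠ 0) :
    a * sinh (2 * s) * sinh (φ a s) = B a s * K a * cosh (φ a s) := by
  have hσ := mul_sinh_two_mul_ne_zero (by linarith) hs
  rw [IsFreeBoundary, tanh_eq_sinh_div_cosh, div_eq_div_iff (cosh_pos _).ne' hσ] at hFBC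
  rw [mul_comm, hFBC]

lemma mul_fstar (hFBC : IsFreeBoundary a s) (ha : 1 / 2 < a) (hs : s ≠ 0) :
    a * sinh (2 * s) * fstar a s = timeCoord a s * B a s ^ 2 := by
  have hA := A_pos ha s
  have hB := B_pos ha s
  have hBf := B_mul_fstar ha s
  rw [eq_div_iff hA.ne'] at hBf
  refine mul_left_cancel₀ (mul_ne_zero hA.ne' hB.ne') ?_
  rw [timeCoord]
  linear_combination a * sinh (2 * s) * hBf + K a * hFBC.mul_sinh_phi ha hs
    + B a s * cosh (φ a s) * K_sq ha s

lemma deriv_fstar_eq (hFBC : IsFreeBoundary a s) (ha : 1 / 2 < a) (hs : s ≠ 0) :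
    deriv (fstar a) s = timeCoord a s := by
  have hB := B_pos ha s
  rw [deriv_fstar ha, div_mul_eq_mul_div, hFBC.mul_fstar ha hs]
  field_simp
  ring

lemma timeCoord_sq_mul (hFBC : IsFreeBoundary a s) (ha : 1 / 2 < a) (hs : s ≠ 0) :
    timeCoord a s ^ 2 * ((a * sinh (2 * s)) ^ 2 - B a s ^ 4) = (a * sinh (2 * s)) ^ 2 := by
  have hsq : (a * sinh (2 * s) * sinh (φ a s)) ^ 2 = (B a s * K a * cosh (φ a s)) ^ 2 := by
    rw [hFBC.mul_sinh_phi ha hs]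
  rw [mul_pow, sinh_sq (φ a s), mul_pow, mul_pow] at hsq
  rw [timeCoord]
  linear_combination hsq + B a s ^ 2 * cosh (φ a s) ^ 2 * K_sq ha s
    + cosh (φ a s) ^ 2 * (a * sinh (2 * s)) ^ 2 * A_sq_eq_B_sq_add_one ha s

lemma fstar_sq (hFBC : IsFreeBoundary a s) (ha : 1 / 2 < a) (hs : s ≠ 0) :
    fstar a s ^ 2 = timeCoord a s ^ 2 - 1 := by
  refine mul_left_cancel₀ (pow_ne_zero 2 (mul_sinh_two_mul_ne_zero (by linarith) hs)) ?_
  rw [← mul_pow, hFBC.mul_fstar ha hs]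
  linear_combination - hFBC.timeCoord_sq_mul ha hs

lemma fstar_pos (hFBC : IsFreeBoundary a s) (ha : 1 / 2 < a) (hs : 0 < s) : 0 < fstar a s := by
  have hσ : 0 < a * sinh (2 * s) := mul_pos (by linarith) (sinh_pos_iff.mpr (by linarith))
  have hF : 0 < timeCoord a s := zero_lt_one.trans_le (one_le_timeCoord ha s)
  refine pos_of_mul_pos_right ?_ hσ.le
  rw [hFBC.mul_fstar ha hs.ne']
  exact mul_pos hF (pow_pos (B_pos ha s) 2)

lemma coth_mul_fstar (hFBC : IsFreeBoundary a s) (ha : 1 / 2 < a) (hs : 0 < s) {r : ℝ}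
    (hr : r = Real.arcosh (timeCoord a s)) :
    cosh r / sinh r * fstar a s = deriv (fstar a) s := by
  have hF := one_le_timeCoord ha s
  have hf := hFBC.fstar_pos ha hs
  have hcosh : cosh r = timeCoord a s := by rw [hr, cosh_arcosh hF]
  have hsinh : sinh r = fstar a s := by
    rw [hr, sinh_arcosh hF, ← hFBC.fstar_sq ha hs.ne', sqrt_sq hf.le]
  rw [hcosh, hsinh, div_mul_cancel₀ _ hf.ne', hFBC.deriv_fstar_eq ha hs.ne']

end IsFreeBoundary

end FreeBoundary

/-- Picone identity with base `f_*`: under the free boundary condition, for every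
integer `k` and every `h` of class `C¹` on `[−s₀, s₀]`, setting `u = f_*·h`,
`S_k(u) = (k² − 1)·∫ f_*²·h²/B + ∫ B·f_*²·h'²`. -/
theorem picone_identity_fstar (a : ℝ) (ha : 1 / 2 < a) (s₀ : ℝ) (hs₀ : 0 < s₀)
    (hFBC : Real.tanh (φ a s₀) = B a s₀ * K a / (a * Real.sinh (2 * s₀)))
    (r : ℝ) (hr : r = arcosh (A a s₀ * Real.cosh (φ a s₀)))
    (k : ℤ) (h : ℝ → ℝ) (hh : ContDiffOn ℝ 1 h (Set.Icc (-s₀) s₀)) :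
    Sk a s₀ r k (fun s => fstar a s * h s)
      = ((k : ℝ) ^ 2 - 1) * (∫ s in (-s₀)..s₀, fstar a s ^ 2 * h s ^ 2 / B a s)
        + ∫ s in (-s₀)..s₀,
            B a s * fstar a s ^ 2 * (derivWithin h (Set.Icc (-s₀) s₀) s) ^ 2 := by
  have robin := IsFreeBoundary.coth_mul_fstar hFBC ha hs₀ hr
  rw [Sk_fstar_mul ha hs₀ r k hh, robin, sub_self, mul_zero, zero_mul, add_zero]

end MoriCatenoid
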